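/- Let k be a field, s ≥ 1 an integer, A = k[x₁,…,xₙ] a polynomial ring, and 𝔭 a prime ideal of A. Assume the residue field k(𝔭) is formally smooth over k (equivalently, separably generated over k), and that char(k) is either 0 or greater than s. Then for every f ∈ A: the image of f lies in 𝔭^{s+1} A_𝔭 if and only if the image of f lies in 𝔭^s A_𝔭 and, for every i ∈ {1,…,n}, the image of the partial derivative ∂f/∂x_i lies in 𝔭^s A_𝔭. (This computes the kernel of the Taylor morphism of order s at 𝔭.) -/

import Mathlib

/-!
Write `R = A_𝔭` and `𝔪 = 𝔭R`. Formal smoothness of `κ = R/𝔪` over `k` gives a `k`-algebra section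
`σ` of `R/𝔪² → κ`. The map `g ↦ g - σ(g mod 𝔪)` is then a `k`-derivation `A → 𝔪/𝔪²` which sends
every `g ∈ 𝔭` to its own class. Choosing lifts `cᵢ ∈ 𝔪` of its values at the variables yields an
Euler derivation `E = ∑ cᵢ ∂/∂xᵢ : A → R` with `E g ≡ g mod 𝔪²` for `g ∈ 𝔭`
(`exists_euler_coeff`). By the Leibniz rule `E g ≡ s g mod 𝔪^(s+1)` for `g ∈ 𝔭^s`
(`euler_sub_nsmul_mem`).

If `f` and all `∂f/∂xᵢ` lie in `𝔪^s`, then `E f ∈ 𝔪 · 𝔪^s`, hence `s f ∈ 𝔪^(s+1)`, and `s` is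
invertible in `k` by the assumption on the characteristic. To apply the Euler congruence, which
concerns elements of `𝔭^s` in `A`, one first multiplies `f` by a denominator `u ∉ 𝔭`. The converse
follows from the Leibniz rule after the same clearing of denominators.
-/

universe u

open MvPolynomial

theorem derivation_mem_pow {k A : Type*} [CommRing k] [CommRing A] [Algebra k A]
    (D : Derivation k A A) (I : Ideal A) (s : ℕ) :
    ∀ g ∈ I ^ (s + 1), D g ∈ I ^ s := by
  induction s with
  | zero => simp
  | succ s ih =>
    intro g hg
    rw [pow_succ] at hg
    induction hg using Submodule.mul_induction_on' with
    | mem_mul_mem a ha b hb =>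
      rw [D.leibniz, smul_eq_mul, smul_eq_mul]
      refine add_mem (Ideal.mul_mem_right _ _ ha) ?_
      rw [pow_succ']
      exact Ideal.mul_mem_mul hb (ih a ha)
    | add a _ b _ ha hb => rw [map_add]; exact add_mem ha hb

/-- A derivation that is the identity on `I` modulo `I²` acts as multiplication by `s` on `I^s`
modulo `I^(s+1)`. -/
theorem euler_sub_nsmul_mem {k A B : Type*} [CommRing k] [CommRing A] [CommRing B] [Algebra k A]
    [Algebra k B] [Algebra A B] [IsScalarTower k A B]
    (D : Derivation k A B) (I : Ideal A)
    (hD : ∀ g ∈ I, D g - algebraMap A B g ∈ I.map (algebraMap A B) ^ 2) (s : ℕ) (hs : 1 ≤ s) :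
    ∀ g ∈ I ^ s, D g - s * algebraMap A B g ∈ I.map (algebraMap A B) ^ (s + 1) := by
  induction s, hs using Nat.le_induction with
  | base => simpa using hD
  | succ s hs ih =>
    intro g hg
    rw [pow_succ] at hg
    induction hg using Submodule.mul_induction_on' with
    | mem_mul_mem a ha b hb =>
      have ha' : algebraMap A B a ∈ I.map (algebraMap A B) ^ s := by
        rw [← Ideal.map_pow]; exact Ideal.mem_map_of_mem _ ha
      have hb' : algebraMap A B b ∈ I.map (algebraMap A B) := Ideal.mem_map_of_mem _ hb
      have h1 := Ideal.mul_mem_mul ha' (hD b hb)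
      have h2 := Ideal.mul_mem_mul (ih a ha) hb'
      rw [← pow_add] at h1
      rw [← pow_succ] at h2
      convert add_mem h1 h2 using 1
      rw [D.leibniz, Algebra.smul_def, Algebra.smul_def, map_mul]
      push_cast
      ring
    | add a _ b _ ha hb =>
      convert add_mem ha hb using 1
      rw [map_add, map_add]
      ring

/-- The derivation `∑ cᵢ ∂/∂xᵢ` from a polynomial ring to an algebra `B` over it. -/
noncomputable def sumPderiv {k : Type*} [CommRing k] {n : ℕ} {B : Type*} [CommRing B]
    [Algebra k B] [Algebra (MvPolynomial (Fin n) k) B] [IsScalarTower k (MvPolynomial (Fin n) k) B]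
    (c : Fin n → B) : Derivation k (MvPolynomial (Fin n) k) B :=
  ∑ i, (LinearMap.toSpanSingleton (MvPolynomial (Fin n) k) B (c i)).compDer (pderiv i)

theorem sumPderiv_apply {k : Type*} [CommRing k] {n : ℕ} {B : Type*} [CommRing B]
    [Algebra k B] [Algebra (MvPolynomial (Fin n) k) B] [IsScalarTower k (MvPolynomial (Fin n) k) B]
    (c : Fin n → B) (g : MvPolynomial (Fin n) k) :
    sumPderiv c g = ∑ i, algebraMap (MvPolynomial (Fin n) k) B (pderiv i g) * c i := by
  have h := congrFun (map_sum (Derivation.coeFnAddMonoidHom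
    (R := k) (A := MvPolynomial (Fin n) k) (M := B))
    (fun i => (LinearMap.toSpanSingleton (MvPolynomial (Fin n) k) B (c i)).compDer (pderiv i))
    Finset.univ) g
  rw [Finset.sum_apply] at h
  refine h.trans ?_
  refine Finset.sum_congr rfl fun i _ => ?_
  rw [← Algebra.smul_def]
  rfl

theorem sumPderiv_X {k : Type*} [CommRing k] {n : ℕ} {B : Type*} [CommRing B]
    [Algebra k B] [Algebra (MvPolynomial (Fin n) k) B] [IsScalarTower k (MvPolynomial (Fin n) k) B]
    (c : Fin n → B) (j : Fin n) : sumPderiv (k := k) c (X j) = c j := by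
  rw [sumPderiv_apply, Finset.sum_eq_single j]
  · simp
  · intro i _ hij
    simp [pderiv_X_of_ne hij.symm]
  · simp

/-- If `R/𝔭R` is formally smooth over `k`, a section of `R/(𝔭R)² → R/𝔭R` supplies coefficients in
`𝔭R` for an Euler derivation, that is, one which is the identity on `𝔭` modulo `(𝔭R)²`. -/
theorem exists_euler_coeff {k : Type*} [CommRing k] {n : ℕ}
    (p : Ideal (MvPolynomial (Fin n) k)) {R : Type*} [CommRing R]
    [Algebra k R] [Algebra (MvPolynomial (Fin n) k) R] [IsScalarTower k (MvPolynomial (Fin n) k) R]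
    (m : Ideal R) (hm : p.map (algebraMap _ R) = m) [Algebra.FormallySmooth k (R ⧸ m)] :
    ∃ c : Fin n → R, (∀ i, c i ∈ m) ∧
      ∀ g ∈ p, sumPderiv (k := k) c g - algebraMap _ R g ∈ m ^ 2 := by
  let q : R ⧸ m ^ 2 →ₐ[k] R ⧸ m := Ideal.Quotient.factorₐ k (Ideal.pow_le_self two_ne_zero)
  have hq : ∀ x : R, q (Ideal.Quotient.mk _ x) = Ideal.Quotient.mk _ x := fun x => rfl
  have hqs : Function.Surjective q := fun y => by
    obtain ⟨x, rfl⟩ := Ideal.Quotient.mk_surjective y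
    exact ⟨Ideal.Quotient.mk _ x, rfl⟩
  have hker : ∀ x y, q x = 0 → q y = 0 → x * y = 0 := fun x y hx hy => by
    obtain ⟨x, rfl⟩ := Ideal.Quotient.mk_surjective x
    obtain ⟨y, rfl⟩ := Ideal.Quotient.mk_surjective y
    rw [hq, Ideal.Quotient.eq_zero_iff_mem] at hx hy
    rw [← map_mul, Ideal.Quotient.eq_zero_iff_mem, pow_two]
    exact Ideal.mul_mem_mul hx hy
  have hnil : IsNilpotent (RingHom.ker (q : R ⧸ m ^ 2 →+* R ⧸ m)) := by
    refine ⟨2, ?_⟩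
    rw [pow_two (RingHom.ker _), Ideal.zero_eq_bot, eq_bot_iff, Ideal.mul_le]
    exact fun x hx y hy => hker x y hx hy
  let σ : R ⧸ m →ₐ[k] R ⧸ m ^ 2 :=
    Algebra.FormallySmooth.liftOfSurjective (AlgHom.id k (R ⧸ m)) q hqs hnil
  have hσ : ∀ x, q (σ x) = x := fun x =>
    Algebra.FormallySmooth.liftOfSurjective_apply (AlgHom.id k (R ⧸ m)) q hqs hnil x
  -- `τ` is the homomorphism `g ↦ σ(g mod 𝔪)`, `ι` the reduction modulo `𝔪²`.
  let ι : MvPolynomial (Fin n) k →ₐ[k] R ⧸ m ^ 2 :=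
    (Ideal.Quotient.mkₐ k (m ^ 2)).comp (IsScalarTower.toAlgHom k _ R)
  have hι : ∀ g, ι g = Ideal.Quotient.mk (m ^ 2) (algebraMap _ R g) := fun g => rfl
  let τ : MvPolynomial (Fin n) k →ₐ[k] R ⧸ m ^ 2 := σ.comp (q.comp ι)
  have hτ : ∀ g, q (ι g - τ g) = 0 := fun g => by
    rw [map_sub, sub_eq_zero]
    exact (hσ _).symm
  choose c hc using fun i => Ideal.Quotient.mk_surjective (ι (X i) - τ (X i))
  have hcm : ∀ i, c i ∈ m := fun i => by
    have := hτ (X i)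
    rwa [← hc, hq, Ideal.Quotient.eq_zero_iff_mem] at this
  -- Both sides are derivations agreeing on the variables; the Leibniz rule for `ι - τ` holds
  -- because its values have pairwise zero products.
  have key : ∀ g, Ideal.Quotient.mk (m ^ 2) (sumPderiv (k := k) c g) = ι g - τ g := fun g => by
    induction g using MvPolynomial.induction_on with
    | C a =>
      rw [← MvPolynomial.algebraMap_eq, Derivation.map_algebraMap, AlgHom.commutes,
        AlgHom.commutes, sub_self, map_zero]
    | add a b ha hb => rw [map_add, map_add, ha, hb, map_add, map_add]; ring
    | mul_X a j ha =>
      have h0 := hker _ _ (hτ a) (hτ (X j))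
      rw [Derivation.leibniz, Algebra.smul_def, Algebra.smul_def, map_add, map_mul, map_mul, ha,
        sumPderiv_X, hc, ← hι, ← hι, map_mul, map_mul]
      linear_combination h0
  refine ⟨c, hcm, fun g hg => ?_⟩
  have hτg : τ g = 0 := by
    have : q (ι g) = 0 := by
      rw [hι, hq, Ideal.Quotient.eq_zero_iff_mem, ← hm]
      exact Ideal.mem_map_of_mem _ hg
    change σ (q (ι g)) = 0
    rw [this, map_zero]
  rw [← Ideal.Quotient.eq_zero_iff_mem, map_sub, key, hτg, ← hι, sub_zero, sub_self]

theorem exists_mul_mem_pow {A R : Type*} [CommRing A] [IsDomain A] [CommRing R] [Algebra A R]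
    (p : Ideal A) [p.IsPrime] [IsLocalization.AtPrime R p] (s : ℕ) (f : A)
    (hf : algebraMap A R f ∈ p.map (algebraMap A R) ^ s) :
    ∃ u ∉ p, u * f ∈ p ^ s := by
  rw [← Ideal.map_pow, IsLocalization.mem_map_algebraMap_iff p.primeCompl] at hf
  obtain ⟨⟨x, u⟩, h⟩ := hf
  refine ⟨u, u.2, ?_⟩
  rw [← map_mul] at h
  have := IsLocalization.injective R p.primeCompl_le_nonZeroDivisors h
  rw [mul_comm, this]
  exact x.2

/-- The theorem for an arbitrary model `R` of the localization `A_𝔭`, with residue ring `R/𝔭R`. -/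
theorem mem_pow_succ_iff_of_isLocalization {k : Type*} [Field k] {n : ℕ}
    (p : Ideal (MvPolynomial (Fin n) k)) [p.IsPrime] {R : Type*} [CommRing R]
    [Algebra k R] [Algebra (MvPolynomial (Fin n) k) R] [IsScalarTower k (MvPolynomial (Fin n) k) R]
    [IsLocalization.AtPrime R p] (m : Ideal R) (hm : p.map (algebraMap _ R) = m)
    [Algebra.FormallySmooth k (R ⧸ m)] (s : ℕ) (hs : 1 ≤ s)
    (hchar : ringChar k = 0 ∨ s < ringChar k) (f : MvPolynomial (Fin n) k) :
    algebraMap _ R f ∈ m ^ (s + 1) ↔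
      algebraMap _ R f ∈ m ^ s ∧ ∀ i, algebraMap _ R (pderiv i f) ∈ m ^ s := by
  have hunit : ∀ u ∉ p, IsUnit (algebraMap _ R u) := fun u hu =>
    (IsLocalization.AtPrime.isUnit_to_map_iff R p u).2 hu
  have hmap : ∀ (t : ℕ), ∀ g ∈ p ^ t, algebraMap _ R g ∈ m ^ t := fun t g hg => by
    rw [← hm, ← Ideal.map_pow]; exact Ideal.mem_map_of_mem _ hg
  constructor
  · intro hf
    have hfs : algebraMap _ R f ∈ m ^ s := Ideal.pow_le_pow_right (Nat.le_succ s) hf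
    refine ⟨hfs, fun i => ?_⟩
    obtain ⟨u, hu, huf⟩ := exists_mul_mem_pow (R := R) p (s + 1) f (hm ▸ hf)
    have h := hmap s _ (derivation_mem_pow (pderiv i) p s _ huf)
    rw [Derivation.leibniz, smul_eq_mul, smul_eq_mul, map_add, map_mul, map_mul] at h
    rw [← Ideal.unit_mul_mem_iff_mem _ (hunit u hu)]
    exact (Ideal.add_mem_iff_left _ (Ideal.mul_mem_right _ _ hfs)).1 h
  · rintro ⟨hf, hdf⟩
    obtain ⟨c, hc, hE⟩ := exists_euler_coeff p m hm
    obtain ⟨u, hu, huf⟩ := exists_mul_mem_pow (R := R) p s f (hm ▸ hf)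
    have h1 := euler_sub_nsmul_mem (sumPderiv (k := k) c) p (by rwa [hm]) s hs _ huf
    rw [hm] at h1
    have h2 : sumPderiv (k := k) c (u * f) ∈ m ^ (s + 1) := by
      rw [sumPderiv_apply, pow_succ]
      refine sum_mem fun i _ => Ideal.mul_mem_mul ?_ (hc i)
      rw [Derivation.leibniz, smul_eq_mul, smul_eq_mul, map_add, map_mul, map_mul]
      exact add_mem (Ideal.mul_mem_left _ _ (hdf i)) (Ideal.mul_mem_right _ _ hf)
    have h3 : (s : R) * algebraMap _ R (u * f) ∈ m ^ (s + 1) := by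
      simpa using sub_mem h2 h1
    have hsk : (s : k) ≠ 0 := fun h => by
      have hdvd := (ringChar.spec k s).1 h
      rcases hchar with h0 | h0
      · rw [h0, zero_dvd_iff] at hdvd
        omega
      · exact absurd (Nat.le_of_dvd hs hdvd) (not_le.2 h0)
    have hsR : IsUnit (s : R) := by
      simpa using (isUnit_iff_ne_zero.2 hsk).map (algebraMap k R)
    rwa [Ideal.unit_mul_mem_iff_mem _ hsR, map_mul,
      Ideal.unit_mul_mem_iff_mem _ (hunit u hu)] at h3

/-- Let `A = k[x₁,…,xₙ]`, `𝔭` a prime of `A` with separably generated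
(= formally smooth) residue field `k(𝔭)`, `s ≥ 1`, and `char k = 0` or `char k > s`.  Then for
every `f ∈ A`: `f ∈ 𝔭^{s+1} A_𝔭` iff `f ∈ 𝔭^s A_𝔭` and `∂f/∂xᵢ ∈ 𝔭^s A_𝔭` for all `i`.
(This computes the kernel of the Taylor morphism of order `s` at `𝔭`.) -/
theorem mem_pow_succ_iff_mem_pow_and_pderiv
    (k : Type u) [Field k] (n : ℕ)
    (p : Ideal (MvPolynomial (Fin n) k)) [p.IsPrime]
    (s : ℕ) (hs : 1 ≤ s)
    (κ : Type u) [Field κ] [Algebra (MvPolynomial (Fin n) k ⧸ p) κ]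
    [IsFractionRing (MvPolynomial (Fin n) k ⧸ p) κ]
    [Algebra k κ] [IsScalarTower k (MvPolynomial (Fin n) k ⧸ p) κ]
    (hfs : Algebra.FormallySmooth k κ)
    (hchar : ringChar k = 0 ∨ s < ringChar k) :
    ∀ f : MvPolynomial (Fin n) k,
      algebraMap (MvPolynomial (Fin n) k) (Localization.AtPrime p) f ∈
          (p.map (algebraMap (MvPolynomial (Fin n) k) (Localization.AtPrime p))) ^ (s + 1) ↔
        (algebraMap (MvPolynomial (Fin n) k) (Localization.AtPrime p) f ∈
            (p.map (algebraMap (MvPolynomial (Fin n) k) (Localization.AtPrime p))) ^ s ∧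
          ∀ i : Fin n,
            algebraMap (MvPolynomial (Fin n) k) (Localization.AtPrime p)
                (MvPolynomial.pderiv i f) ∈
              (p.map (algebraMap (MvPolynomial (Fin n) k) (Localization.AtPrime p))) ^ s) := by
  have : Algebra.FormallySmooth k p.ResidueField :=
    .of_equiv ((IsLocalization.algEquiv (nonZeroDivisors (MvPolynomial (Fin n) k ⧸ p)) κ
      p.ResidueField).restrictScalars k)
  have hm : p.map (algebraMap (MvPolynomial (Fin n) k) (Localization.AtPrime p)) =
      IsLocalRing.maximalIdeal (Localization.AtPrime p) :=
    Localization.AtPrime.map_eq_maximalIdeal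
  have : Algebra.FormallySmooth k
      (Localization.AtPrime p ⧸ IsLocalRing.maximalIdeal (Localization.AtPrime p)) := this
  rw [hm]
  exact mem_pow_succ_iff_of_isLocalization p _ hm s hs hchar
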